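/- Let k be an algebraically closed field and S = k[x_1,...,x_r]. Suppose D = (p_{ij}) is an 8×8 matrix with entries in S satisfying the standard conditions, and suppose moreover that p_{ij} = 0 unless (i = 1 and 2 ≤ j ≤ 8) or (2 ≤ i ≤ 4 and 5 ≤ j ≤ 8) or (5 ≤ i ≤ 7 and j = 8). Then r < 4, i.e., r ≤ 3. -/

import Mathlib

open MvPolynomial

/-- The "standard conditions" on an `8 × 8` matrix `D = (p_{ij})` with entries in
`S = k[x_1, ..., x_r]`:
(1) `D` is strictly upper triangular;
(2) `D² = 0`;
(3) every entry vanishes at the origin;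
(4) for every nonzero point `a ∈ k^r` the evaluated matrix `D(a)` has rank `4`;
(5) there is a nonincreasing `8`-tuple of integers `(d_1, ..., d_8)` such that each `p_{ij}`
is homogeneous of degree `d_i - d_j + 1` (the zero polynomial being homogeneous of
any degree). -/
def StandardConditions {k : Type*} [Field k] {r : ℕ}
    (D : Matrix (Fin 8) (Fin 8) (MvPolynomial (Fin r) k)) : Prop :=
  (∀ i j : Fin 8, j ≤ i → D i j = 0) ∧
  D * D = 0 ∧
  (∀ i j : Fin 8, eval (0 : Fin r → k) (D i j) = 0) ∧
  (∀ a : Fin r → k, a ≠ 0 → (D.map (eval a)).rank = 4) ∧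
  (∃ d : Fin 8 → ℤ, Antitone d ∧
    ∀ i j : Fin 8, D i j = 0 ∨
      (0 ≤ d i - d j + 1 ∧ (D i j).IsHomogeneous (d i - d j + 1).toNat))

/-!
Let `D` be strictly block upper triangular with diagonal blocks of sizes `1, n, n, 1` (an index `i`
lies in block `lev i`), and let `M` be its middle `n × n` block, between blocks `1` and `2`. Suppose
there are more than `n ≥ 2` variables; we find a nonzero point where `D` has rank at most `n`.

If `det M ≠ 0`, then `D² = 0` forces the blocks `(0, 1)` and `(2, 3)` to vanish, so `D` is supported
on its upper right `(n + 1) × (n + 1)` block. The determinant of that block vanishes at the origin,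
hence at some other point.

If `det M = 0`, then the adjugate of `M` has rank at most one over the fraction field, so by unique
factorization it is an outer product `g hᵀ`. It vanishes at the origin, so one of `g`, `h` does, and
by Krull's height theorem the `n` entries of that vector have another common zero. There the
adjugate of `M` vanishes, so `M` has rank at most `n - 2`, and the first row and last column of `D`
add at most `2`.
-/

open Finset
open scoped Matrix

theorem card_filter_eq_or_eq {ι α : Type*} [Fintype ι] [DecidableEq α] (f : ι → α) {a b : α}
    (hab : a ≠ b) : #{i | f i = a ∨ f i = b} = #{i | f i = a} + #{i | f i = b} := by
  classical
  rw [filter_or, card_union_of_disjoint]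
  exact disjoint_filter.2 fun i _ ha hb => hab (ha.symm.trans hb)

theorem exists_injective_range_eq {ι : Type*} {s : Finset ι} {n : ℕ} (hs : #s = n) :
    ∃ u : Fin n → ι, Function.Injective u ∧ Set.range u = s :=
  ⟨Subtype.val ∘ (s.equivFinOfCardEq hs).symm,
    Subtype.val_injective.comp (Equiv.injective _), by
      rw [EquivLike.range_comp, Subtype.range_coe_subtype, setOfPred_mem]⟩

section Rank

variable {K m n : Type*} [Field K] [Finite m] [Fintype n]

theorem rank_le_card_add_rank_of_col_mem_span {o : Type*} [Fintype o]
    (A : Matrix m n K) (B : Matrix m o K) (t : Finset n)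
    (h : ∀ j ∉ t, A.col j ∈ Submodule.span K (Set.range B.col)) :
    A.rank ≤ #t + B.rank := by
  classical
  let V : Submodule K (m → K) := .span K (t.image A.col : Set (m → K))
  let W : Submodule K (m → K) := .span K (Set.range B.col)
  have hspan : Submodule.span K (Set.range A.col) ≤ V ⊔ W := by
    rw [Submodule.span_le]
    rintro _ ⟨j, rfl⟩
    by_cases hj : j ∈ t
    · exact Submodule.mem_sup_left (Submodule.subset_span (by simpa using ⟨j, hj, rfl⟩))
    · exact Submodule.mem_sup_right (h j hj)
  have hV : Module.finrank K V ≤ #t := (finrank_span_finset_le_card _).trans card_image_le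
  rw [Matrix.rank_eq_finrank_span_cols, Matrix.rank_eq_finrank_span_cols]
  calc _ ≤ Module.finrank K (V ⊔ W : Submodule K (m → K)) := Submodule.finrank_mono hspan
    _ ≤ Module.finrank K V + Module.finrank K W :=
      Submodule.finrank_add_le_finrank_add_finrank V W
    _ ≤ #t + Module.finrank K W := by gcongr

theorem rank_le_card_add_rank_of_row_mem_span {l : Type*} [Finite l]
    (A : Matrix m n K) (B : Matrix l n K) (s : Finset m)
    (h : ∀ i ∉ s, A.row i ∈ Submodule.span K (Set.range B.row)) :
    A.rank ≤ #s + B.rank := by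
  have := Fintype.ofFinite m
  have := Fintype.ofFinite l
  rw [← A.rank_transpose, ← B.rank_transpose]
  exact rank_le_card_add_rank_of_col_mem_span Aᵀ Bᵀ s h

theorem rank_le_card_add_card_add_rank_submatrix {m₀ n₀ : Type*} [Finite m₀] [Fintype n₀]
    (A : Matrix m n K) {s : Finset m} {t : Finset n} {f : m₀ → m} {g : n₀ → n}
    (hf : ∀ a, f a ∉ s) (hg : ∀ b, g b ∉ t)
    (h : ∀ i ∉ s, ∀ j ∉ t, A i j ≠ 0 → i ∈ Set.range f ∧ j ∈ Set.range g) :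
    A.rank ≤ #s + #t + (A.submatrix f g).rank := by
  classical
  let B : Matrix m n K := .of fun i j => if j ∈ t then 0 else A i j
  have hAB : A.rank ≤ #t + B.rank := by
    refine rank_le_card_add_rank_of_col_mem_span A B t fun j hj => Submodule.subset_span ⟨j, ?_⟩
    ext i
    simp [B, hj]
  have hB : B.rank ≤ #s + (B.submatrix f id).rank := by
    refine rank_le_card_add_rank_of_row_mem_span B _ s fun i hi => ?_
    by_cases hif : i ∈ Set.range f
    · obtain ⟨a, rfl⟩ := hif
      exact Submodule.subset_span ⟨a, rfl⟩
    · have hBi : B.row i = 0 := by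
        ext j
        by_contra hij
        simp only [B, Matrix.row, Matrix.of_apply, Pi.zero_apply, ite_eq_left_iff] at hij
        grind
      exact hBi ▸ zero_mem _
  have hBf : (B.submatrix f id).rank ≤ #(∅ : Finset n) + (A.submatrix f g).rank := by
    refine rank_le_card_add_rank_of_col_mem_span _ _ ∅ fun j _ => ?_
    by_cases hjg : j ∈ Set.range g
    · obtain ⟨b, rfl⟩ := hjg
      refine Submodule.subset_span ⟨b, ?_⟩
      ext a
      simp [B, hg b]
    · have hBj : (B.submatrix f id).col j = 0 := by
        ext a
        by_contra haj
        simp only [B, Matrix.col, Matrix.transpose_apply, Matrix.submatrix_apply, Matrix.of_apply,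
          id_eq, Pi.zero_apply, ite_eq_left_iff] at haj
        grind
      exact hBj ▸ zero_mem _
  grind

theorem mul_apply_comm_of_rank_le_one {N : Matrix m n K} (hN : N.rank ≤ 1) (i l : m) (j p : n) :
    N i j * N l p = N i p * N l j := by
  rw [Matrix.rank_eq_finrank_span_cols, finrank_le_one_iff] at hN
  obtain ⟨v, hv⟩ := hN
  have hcol (j : n) : ∃ c : K, ∀ i, N i j = c * (v : m → K) i := by
    obtain ⟨c, hc⟩ := hv ⟨N.col j, Submodule.subset_span ⟨j, rfl⟩⟩
    exact ⟨c, fun i => (congrFun (congrArg Subtype.val hc) i).symm⟩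
  choose c hc using hcol
  simp only [hc]
  ring

end Rank

section Adjugate

variable {n : Type*} [Fintype n] [DecidableEq n]

theorem exists_eq_unit_mul_diagonal_mul_unit {K : Type*} [Field K] (A : Matrix n n K) :
    ∃ (V U : (Matrix n n K)ˣ) (w : n → K), A = V * Matrix.diagonal w * U := by
  obtain ⟨L, L', w, hA⟩ := Matrix.Pivot.exists_list_transvec_mul_diagonal_mul_list_transvec A
  have hunit (L : List (Matrix.TransvectionStruct n K)) :
      IsUnit (L.map Matrix.TransvectionStruct.toMatrix).prod := by
    simp [Matrix.isUnit_iff_isUnit_det]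
  exact ⟨(hunit L).unit, (hunit L').unit, w, hA⟩

theorem rank_add_two_le_of_adjugate_eq_zero {K : Type*} [Field K] [Nonempty n]
    {A : Matrix n n K} (hA : A.adjugate = 0) : A.rank + 2 ≤ Fintype.card n := by
  classical
  obtain ⟨V, U, w, rfl⟩ := exists_eq_unit_mul_diagonal_mul_unit A
  have hw : Matrix.diagonal w = (↑V⁻¹ : Matrix n n K) *
      ((V : Matrix n n K) * Matrix.diagonal w * (U : Matrix n n K)) * (↑U⁻¹ : Matrix n n K) := by
    simp only [mul_assoc, Units.inv_mul_cancel_left, Units.mul_inv, mul_one]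
  have hadj : (Matrix.diagonal w).adjugate = 0 := by
    rw [hw, Matrix.adjugate_mul_distrib, Matrix.adjugate_mul_distrib, hA, zero_mul, mul_zero]
  have hzero (i : n) : ∃ j ≠ i, w j = 0 := by
    have hi := congrFun (congrFun hadj i) i
    rw [Matrix.adjugate_diagonal, Matrix.diagonal_apply_eq, Matrix.zero_apply,
      prod_eq_zero_iff] at hi
    simpa using hi
  obtain ⟨i, -, hi⟩ := hzero (Classical.arbitrary n)
  obtain ⟨j, hji, hj⟩ := hzero i
  have hcard : Fintype.card {x // w x ≠ 0} + 2 ≤ Fintype.card n := by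
    rw [Fintype.card_subtype, ← card_pair hji, ← card_univ,
      ← card_union_of_disjoint (by grind [Finset.disjoint_left])]
    exact card_le_univ _
  calc _ ≤ (Matrix.diagonal w).rank + 2 := by
        gcongr
        exact (Matrix.rank_mul_le_left _ _).trans (Matrix.rank_mul_le_right _ _)
    _ = _ := by rw [Matrix.rank_diagonal]
    _ ≤ _ := hcard

theorem rank_adjugate_le_one {K : Type*} [Field K] {A : Matrix n n K} (hA : A.det = 0) :
    A.adjugate.rank ≤ 1 := by
  obtain ⟨V, U, w, rfl⟩ := exists_eq_unit_mul_diagonal_mul_unit A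
  obtain ⟨i, hi⟩ : ∃ i, w i = 0 := by
    have hV : (V : Matrix n n K).det ≠ 0 := V.isUnit.map Matrix.detMonoidHom |>.ne_zero
    have hU : (U : Matrix n n K).det ≠ 0 := U.isUnit.map Matrix.detMonoidHom |>.ne_zero
    simpa [hV, hU, prod_eq_zero_iff] using hA
  rw [Matrix.adjugate_mul_distrib, Matrix.adjugate_mul_distrib, Matrix.adjugate_diagonal]
  refine (Matrix.rank_mul_le_right _ _).trans ((Matrix.rank_mul_le_left _ _).trans ?_)
  refine Matrix.rank_le_card_of_support_subset _ {i} fun j hj => ?_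
  by_contra hji
  have hprod : ∏ l ∈ univ.erase j, w l = 0 :=
    prod_eq_zero (mem_erase.2 ⟨fun hij => hji (by simp [hij]), mem_univ i⟩) hi
  refine hj ?_
  ext l
  rcases eq_or_ne j l with rfl | hjl <;> simp [*]

theorem adjugate_mul_apply_comm_of_det_eq_zero {R : Type*} [CommRing R] [IsDomain R]
    {A : Matrix n n R} (hA : A.det = 0) (i l j p : n) :
    A.adjugate i j * A.adjugate l p = A.adjugate i p * A.adjugate l j := by
  let φ := algebraMap R (FractionRing R)
  have hrank : (φ.mapMatrix A.adjugate).rank ≤ 1 := by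
    rw [RingHom.map_adjugate]
    exact rank_adjugate_le_one (by rw [← RingHom.map_det, hA, map_zero])
  apply IsFractionRing.injective R (FractionRing R)
  simpa using mul_apply_comm_of_rank_le_one hrank i l j p

end Adjugate

-- The left factor `g` is a nonzero column divided by its gcd: as its entries are coprime, the
-- relations `N i j * g l = g i * N l j` make `g i` divide the `i`-th row.
theorem exists_eq_vecMulVec_of_mul_apply_comm {R m n : Type*} [CommRing R] [IsDomain R]
    [IsGCDMonoid R] [Finite m] {N : Matrix m n R}
    (hN : ∀ i l j p, N i j * N l p = N i p * N l j) :
    ∃ g h, N = Matrix.vecMulVec g h := by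
  have := Fintype.ofFinite m
  obtain ⟨_⟩ : Nonempty (NormalizedGCDMonoid R) := inferInstance
  by_cases hzero : N = 0
  · exact ⟨0, 0, by simpa using hzero⟩
  obtain ⟨i₀, j₀, hne⟩ : ∃ i j, N i j ≠ 0 := by
    by_contra! h
    exact hzero (Matrix.ext h)
  obtain ⟨g, hg, hgcd⟩ := univ.extract_gcd (N · j₀) ⟨i₀, mem_univ i₀⟩
  set d := univ.gcd (N · j₀)
  have hcol (i : m) : N i j₀ = d * g i := hg i (mem_univ i)
  have hd : d ≠ 0 := fun hd => hne (by rw [hcol, hd, zero_mul])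
  have hg₀ : g i₀ ≠ 0 := fun hg₀ => hne (by rw [hcol, hg₀, mul_zero])
  have hcross (i l : m) (j : n) : N i j * g l = g i * N l j := by
    apply mul_left_cancel₀ hd
    linear_combination hN i l j j₀ - N i j * hcol l + N l j * hcol i
  have hdvd (j : n) : g i₀ ∣ N i₀ j := by
    have h₁ : g i₀ ∣ univ.gcd (fun l => N i₀ j * g l) :=
      dvd_gcd fun l _ => ⟨N l j, hcross i₀ l j⟩
    have h₂ := univ.gcd_mul_left' g (N i₀ j)
    rw [hgcd, mul_one] at h₂
    exact h₁.trans h₂.dvd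
  choose h hh using hdvd
  refine ⟨g, h, Matrix.ext fun i j => mul_right_cancel₀ hg₀ ?_⟩
  rw [hcross, hh, Matrix.vecMulVec_apply]
  ring

section CommonZeros

variable {k σ : Type*} [Field k]

theorem height_vanishingIdeal_singleton_eq (x y : σ → k) :
    (vanishingIdeal k {x}).height = (vanishingIdeal k {y}).height := by
  -- The translation automorphism taking one point to the other.
  let e : MvPolynomial σ k ≃ₐ[k] MvPolynomial σ k :=
    .ofAlgHom (aeval fun i => X i + C (x i - y i)) (aeval fun i => X i - C (x i - y i))
      (by ext; simp) (by ext; simp)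
  have hcomp : (aeval y).comp (e : MvPolynomial σ k →ₐ[k] MvPolynomial σ k) = aeval x := by
    ext
    simp [e]
  have he : (vanishingIdeal k {y}).comap (e : MvPolynomial σ k ≃+* MvPolynomial σ k) =
      vanishingIdeal k {x} := by
    ext p
    rw [Ideal.mem_comap, mem_vanishingIdeal_singleton_iff, mem_vanishingIdeal_singleton_iff,
      ← hcomp]
    rfl
  rw [← he, RingEquiv.height_comap]

variable [IsAlgClosed k] [Finite σ]

theorem height_vanishingIdeal_singleton (x : σ → k) :
    (vanishingIdeal k {x}).height = Nat.card σ := by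
  have hdim : ringKrullDim (MvPolynomial σ k) = Nat.card σ := by
    simp [MvPolynomial.ringKrullDim_of_isNoetherianRing]
  have : FiniteRingKrullDim (MvPolynomial σ k) := by
    rw [finiteRingKrullDim_iff_ne_bot_and_top, hdim]
    exact ⟨nofun, nofun⟩
  obtain ⟨p, hp, hheight⟩ := Ideal.exists_isMaximal_height (R := MvPolynomial σ k)
  obtain ⟨y, rfl⟩ := isMaximal_iff_eq_vanishingIdeal_singleton.1 hp
  rw [height_vanishingIdeal_singleton_eq x y]
  exact_mod_cast hheight.trans hdim

theorem exists_ne_forall_eval_eq_zero {n : Type*} [Finite n] (hn : Nat.card n < Nat.card σ)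
    {g : n → MvPolynomial σ k} {x : σ → k} (hg : ∀ i, eval x (g i) = 0) :
    ∃ a ≠ x, ∀ i, eval a (g i) = 0 := by
  by_contra! hisolated
  have hlocus : zeroLocus k (Ideal.span (Set.range g)) = {x} := by
    ext a
    rw [zeroLocus_span, Set.mem_singleton_iff, Set.mem_ofPred_eq, Set.forall_mem_range]
    refine ⟨fun ha => by_contra fun hne => ?_, ?_⟩
    · obtain ⟨i, hi⟩ := hisolated a hne
      exact hi (ha i)
    · rintro rfl
      exact hg
  have hmin : vanishingIdeal k {x} ∈ (Ideal.span (Set.range g)).minimalPrimes := by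
    rw [← Ideal.radical_minimalPrimes, ← vanishingIdeal_zeroLocus_eq_radical (K := k), hlocus,
      Ideal.minimalPrimes_eq_subsingleton_self]
    rfl
  have hheight := Ideal.height_le_card_of_mem_minimalPrimes_span (Set.finite_range g) hmin
  rw [height_vanishingIdeal_singleton, Nat.cast_le] at hheight
  have := Fintype.ofFinite n
  exact absurd (hheight.trans (Finite.card_range_le g)) hn.not_ge

end CommonZeros

section Degeneration

variable {k σ : Type*} [Field k] [IsAlgClosed k] [Finite σ]

theorem exists_ne_zero_rank_add_two_le {n : Type*} [Fintype n] [DecidableEq n] [Nontrivial n]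
    (hn : Fintype.card n < Nat.card σ)
    {M : Matrix n n (MvPolynomial σ k)} (hM : M.det = 0)
    (hM₀ : ∀ i j, eval 0 (M i j) = 0) :
    ∃ a : σ → k, a ≠ 0 ∧ (M.map (eval a)).rank + 2 ≤ Fintype.card n := by
  obtain ⟨g, h, hgh⟩ :=
    exists_eq_vecMulVec_of_mul_apply_comm (adjugate_mul_apply_comm_of_det_eq_zero hM)
  have hadj (a : σ → k) (i j : n) :
      (M.map (eval a)).adjugate i j = eval a (g i) * eval a (h j) := by
    have := congrFun₂ (RingHom.map_adjugate (eval a) M) i j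
    rw [hgh] at this
    simpa [Matrix.vecMulVec_apply] using this.symm
  have hprod (i j : n) : eval 0 (g i) * eval 0 (h j) = 0 := by
    have hM0 : M.map (eval (0 : σ → k)) = 0 := Matrix.ext hM₀
    rw [← hadj, hM0, Matrix.adjugate_zero, Matrix.zero_apply]
  have hfactor : (∀ i, eval 0 (g i) = 0) ∨ ∀ j, eval 0 (h j) = 0 := by
    by_contra! hne
    obtain ⟨⟨i, hi⟩, j, hj⟩ := hne
    exact mul_ne_zero hi hj (hprod i j)
  rw [← Nat.card_eq_fintype_card] at hn
  rcases hfactor with hg | hh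
  · obtain ⟨a, ha, hga⟩ := exists_ne_forall_eval_eq_zero hn hg
    exact ⟨a, ha, rank_add_two_le_of_adjugate_eq_zero <| Matrix.ext fun i j => by simp [hadj, hga]⟩
  · obtain ⟨a, ha, hha⟩ := exists_ne_forall_eval_eq_zero hn hh
    exact ⟨a, ha, rank_add_two_le_of_adjugate_eq_zero <| Matrix.ext fun i j => by simp [hadj, hha]⟩

theorem exists_ne_zero_rank_lt {n : Type*} [Fintype n] [Nonempty n] (hσ : 1 < Nat.card σ)
    {M : Matrix n n (MvPolynomial σ k)} (hM₀ : ∀ i j, eval 0 (M i j) = 0) :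
    ∃ a : σ → k, a ≠ 0 ∧ (M.map (eval a)).rank < Fintype.card n := by
  classical
  have hdet (a : σ → k) : eval a M.det = (M.map (eval a)).det := RingHom.map_det _ _
  have hdet₀ : eval 0 M.det = 0 := by
    have hM0 : M.map (eval (0 : σ → k)) = 0 := Matrix.ext hM₀
    rw [hdet, hM0, Matrix.det_zero]
  obtain ⟨a, ha, hdeta⟩ :=
    exists_ne_forall_eval_eq_zero (g := fun _ : Unit => M.det) (by simpa using hσ) fun _ => hdet₀
  refine ⟨a, ha, (Matrix.rank_le_card_width _).lt_of_ne fun hrank => ?_⟩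
  rw [Matrix.rank_eq_finrank_span_cols] at hrank
  have hunit : IsUnit (M.map (eval a)) := Matrix.linearIndependent_cols_iff_isUnit.1
    (linearIndependent_iff_card_eq_finrank_span.2 hrank.symm)
  exact ((Matrix.isUnit_iff_isUnit_det _).1 hunit).ne_zero (hdet a ▸ hdeta ())

theorem exists_ne_zero_rank_lt_of_support {ι κ : Type*} [Finite ι] [Fintype κ]
    {D : Matrix ι κ (MvPolynomial σ k)} {s : Finset ι} {t : Finset κ} {n : ℕ}
    (hσ : 1 < Nat.card σ) (hn : n ≠ 0) (hs : #s = n) (ht : #t = n)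
    (hD : ∀ i j, D i j ≠ 0 → i ∈ s ∧ j ∈ t) (hD₀ : ∀ i j, eval 0 (D i j) = 0) :
    ∃ a : σ → k, a ≠ 0 ∧ (D.map (eval a)).rank < n := by
  have : NeZero n := ⟨hn⟩
  obtain ⟨w, -, hw⟩ := exists_injective_range_eq hs
  obtain ⟨z, -, hz⟩ := exists_injective_range_eq ht
  obtain ⟨a, ha, hrank⟩ := exists_ne_zero_rank_lt (M := D.submatrix w z) hσ
    fun i j => hD₀ (w i) (z j)
  have hle := rank_le_card_add_card_add_rank_submatrix (D.map (eval a))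
    (s := ∅) (t := ∅) (f := w) (g := z) (by simp) (by simp) fun i _ j _ hij => by
      simpa [hw, hz] using hD i j fun h => hij (by simp [h])
  rw [card_empty, card_empty, Matrix.submatrix_map] at hle
  rw [Fintype.card_fin] at hrank
  exact ⟨a, ha, by lia⟩

theorem exists_ne_zero_rank_add_two_le_of_det_submatrix_eq_zero {ι n : Type*} [Fintype ι]
    [Fintype n] [DecidableEq n] [Nontrivial n] (hn : Fintype.card n < Nat.card σ)
    {D : Matrix ι ι (MvPolynomial σ k)} {lev : ι → Fin 4}
    (hD : ∀ i j, lev j ≤ lev i → D i j = 0) (hD₀ : ∀ i j, eval 0 (D i j) = 0) {u v : n → ι}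
    (hur : Set.range u = {i | lev i = 1}) (hvr : Set.range v = {i | lev i = 2})
    (hdet : (D.submatrix u v).det = 0) :
    ∃ a : σ → k, a ≠ 0 ∧
      (D.map (eval a)).rank + 2 ≤ #{i | lev i = 0} + #{i | lev i = 3} + Fintype.card n := by
  obtain ⟨a, ha, hrank⟩ := exists_ne_zero_rank_add_two_le hn hdet fun i j => hD₀ (u i) (v j)
  have hlu (s : n) : lev (u s) = 1 := hur.subset ⟨s, rfl⟩
  have hlv (s : n) : lev (v s) = 2 := hvr.subset ⟨s, rfl⟩
  have hle := rank_le_card_add_card_add_rank_submatrix (D.map (eval a))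
    (s := {i | lev i = 0}) (t := {j | lev j = 3}) (f := u) (g := v)
    (by simp [hlu]) (by simp [hlv]) fun i hi j hj hij => by
      have hlt : lev i < lev j := not_le.1 fun h => hij (by simp [hD i j h])
      rw [mem_filter_univ] at hi hj
      rw [hur, hvr, Set.mem_ofPred_eq, Set.mem_ofPred_eq]
      lia
  rw [Matrix.submatrix_map] at hle
  exact ⟨a, ha, by lia⟩

end Degeneration

section Levels

variable {R n : Type*} [CommRing R] [IsDomain R] [Fintype n] [DecidableEq n]

theorem eq_zero_of_vecMul_eq_zero_of_det_submatrix_ne_zero {m o : Type*} [Fintype m]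
    {w : m → R} {B : Matrix m o R} (hwB : w ᵥ* B = 0) {e : n → m}
    {f : n → o} (he : Function.Injective e) (hdet : (B.submatrix e f).det ≠ 0)
    (hw : ∀ x ∉ Set.range e, ∀ j, w x * B x (f j) = 0) (s : n) : w (e s) = 0 := by
  have hvec : (w ∘ e) ᵥ* B.submatrix e f = 0 := by
    ext j
    refine Eq.trans ?_ (congrFun hwB (f j))
    exact Fintype.sum_of_injective e he _ _ (fun x hx => hw x hx j) fun _ => rfl
  exact congrFun (Matrix.eq_zero_of_vecMul_eq_zero hdet hvec) s

theorem level_eq_of_ne_zero_of_det_submatrix_ne_zero {ι : Type*} [Fintype ι]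
    {D : Matrix ι ι R} (hsq : D * D = 0) {lev : ι → Fin 4}
    (hD : ∀ i j, lev j ≤ lev i → D i j = 0) {u v : n → ι}
    (hu : Function.Injective u) (hv : Function.Injective v)
    (hur : Set.range u = {i | lev i = 1}) (hvr : Set.range v = {i | lev i = 2})
    (hdet : (D.submatrix u v).det ≠ 0) {i j : ι} (hij : D i j ≠ 0) :
    (lev i = 0 ∨ lev i = 1) ∧ (lev j = 2 ∨ lev j = 3) := by
  have hlt : lev i < lev j := not_le.1 fun h => hij (hD i j h)
  have hlu (s : n) : lev (u s) = 1 := hur.subset ⟨s, rfl⟩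
  have hlv (s : n) : lev (v s) = 2 := hvr.subset ⟨s, rfl⟩
  constructor
  · by_contra hi
    obtain ⟨s, rfl⟩ : i ∈ Set.range v := by
      rw [hvr, Set.mem_ofPred_eq]
      lia
    refine hij (eq_zero_of_vecMul_eq_zero_of_det_submatrix_ne_zero
      (w := D.col j) (B := Dᵀ) (f := u) ?_ hv ?_ ?_ s)
    · ext x
      rw [Matrix.vecMul_transpose, Matrix.mulVec]
      exact congrFun₂ hsq x j
    · rwa [← Matrix.transpose_submatrix, Matrix.det_transpose]
    · intro x hx t
      rw [hvr, Set.mem_ofPred_eq] at hx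
      rcases le_or_gt (lev j) (lev x) with hjx | hxj
      · exact mul_eq_zero_of_left (hD x j hjx) _
      · exact mul_eq_zero_of_right _ (hD (u t) x (by grind))
  · by_contra hj
    obtain ⟨s, rfl⟩ : j ∈ Set.range u := by
      rw [hur, Set.mem_ofPred_eq]
      lia
    refine hij (eq_zero_of_vecMul_eq_zero_of_det_submatrix_ne_zero
      (w := D.row i) (B := D) (f := v) ?_ hu hdet ?_ s)
    · ext x
      exact congrFun₂ hsq i x
    · intro x hx t
      rw [hur, Set.mem_ofPred_eq] at hx
      rcases le_or_gt (lev x) (lev i) with hxi | hix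
      · exact mul_eq_zero_of_left (hD i x hxi) _
      · exact mul_eq_zero_of_right _ (hD x (v t) (by grind))

end Levels

theorem statement_9_general {k σ ι : Type*} [Field k] [IsAlgClosed k] [Finite σ] [Fintype ι]
    {n : ℕ} (hn : 2 ≤ n) {D : Matrix ι ι (MvPolynomial σ k)} {lev : ι → Fin 4}
    (hcard : ∀ l, #{i | lev i = l} = ![1, n, n, 1] l)
    (hD : ∀ i j, lev j ≤ lev i → D i j = 0) (hsq : D * D = 0)
    (hD₀ : ∀ i j, eval 0 (D i j) = 0)
    (hrank : ∀ a : σ → k, a ≠ 0 → n < (D.map (eval a)).rank) : Nat.card σ ≤ n := by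
  by_contra! hσ
  suffices ∃ a : σ → k, a ≠ 0 ∧ (D.map (eval a)).rank ≤ n by
    obtain ⟨a, ha, hle⟩ := this
    exact (hrank a ha).not_ge hle
  have := Fin.nontrivial_iff_two_le.2 hn
  obtain ⟨u, hu, hur⟩ := exists_injective_range_eq (n := n) (hcard 1)
  obtain ⟨v, hv, hvr⟩ := exists_injective_range_eq (n := n) (hcard 2)
  rw [coe_filter_univ] at hur hvr
  by_cases hdet : (D.submatrix u v).det = 0
  · obtain ⟨a, ha, hle⟩ := exists_ne_zero_rank_add_two_le_of_det_submatrix_eq_zero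
      (by simpa using hσ) hD hD₀ hur hvr hdet
    have htwo : #{i | lev i = 0} + #{i | lev i = 3} = 2 := by simp [hcard]
    rw [htwo, Fintype.card_fin] at hle
    exact ⟨a, ha, by lia⟩
  · have hsupp (i j : ι) : D i j ≠ 0 → (lev i = 0 ∨ lev i = 1) ∧ (lev j = 2 ∨ lev j = 3) :=
      level_eq_of_ne_zero_of_det_submatrix_ne_zero hsq hD hu hv hur hvr hdet
    obtain ⟨a, ha, hlt⟩ := exists_ne_zero_rank_lt_of_support (D := D) (n := n + 1)
      (s := {i | lev i = 0 ∨ lev i = 1}) (t := {j | lev j = 2 ∨ lev j = 3})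
      (by lia) n.succ_ne_zero (by simp [card_filter_eq_or_eq, hcard, add_comm])
      (by simp [card_filter_eq_or_eq, hcard]) (by simpa using hsupp) hD₀
    exact ⟨a, ha, Nat.le_of_lt_succ hlt⟩

theorem statement_9 {k : Type*} [Field k] [IsAlgClosed k] {r : ℕ}
    (D : Matrix (Fin 8) (Fin 8) (MvPolynomial (Fin r) k))
    (hstd : StandardConditions D)
    (hzero : ∀ i j : Fin 8,
        ¬((1 ≤ (i : ℕ) + 1 ∧ (i : ℕ) + 1 ≤ 1 ∧ 2 ≤ (j : ℕ) + 1 ∧ (j : ℕ) + 1 ≤ 8) ∨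
          (2 ≤ (i : ℕ) + 1 ∧ (i : ℕ) + 1 ≤ 4 ∧ 5 ≤ (j : ℕ) + 1 ∧ (j : ℕ) + 1 ≤ 8) ∨
          (5 ≤ (i : ℕ) + 1 ∧ (i : ℕ) + 1 ≤ 7 ∧ 8 ≤ (j : ℕ) + 1 ∧ (j : ℕ) + 1 ≤ 8)) →
        D i j = 0) :
    r < 4 := by
  obtain ⟨-, hsq, hD₀, hrank, -⟩ := hstd
  simpa [Nat.lt_succ_iff] using statement_9_general (n := 3) (lev := ![0, 1, 1, 1, 2, 2, 2, 3])
    (by norm_num) (by decide) (fun i j h => hzero i j (by revert i j; decide)) hsq hD₀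
    fun a ha => (hrank a ha).ge
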